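/- Let Θ be a partially ordered set in which every pair of elements has an upper bound and a lower bound in Θ, let A be a set, and let u : A × Θ → ℝ be such that the environment (A, Θ, u) is convex. Then u has single-crossing differences (SCD) if and only if there exist functions g₁, g₂ : A → ℝ and f₁, f₂, h : Θ → ℝ such that f₁ and f₂ are each single crossing and ratio ordered, and for all a ∈ A and θ ∈ Θ, u(a, θ) = g₁(a)·f₁(θ) + g₂(a)·f₂(θ) + h(θ). -/

import Mathlib

/-!
If `f` is single crossing then along a chain `l ≤ m ≤ h` the value `f m` is a nonnegative
combination, not trivial, of `f l` and `f h`; since any two chains lie in a common order interval,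
this property characterizes single crossing. Convexity makes the multiples of the differences
`u a - u b` a linear space `V`, and SCD says that `V` consists of single crossing functions. The
coefficients of the combination can then be chosen uniformly over `V`: the evaluation functional at
`m` lies in the cone of the evaluations at `l` and `h`. Hence the evaluations in an interval lie in
the span of those at its endpoints, so `V` is at most two-dimensional, and a spanning pair
`f₁, f₂` again satisfies the cone condition as a planar curve `(f₁, f₂)`. For planar curves this
condition means that both coordinates are single crossing and that the curve turns in one direction
without degenerating, which is ratio ordering.
-/

/-- A function `f : Θ → ℝ` is single crossing if `θ ↦ sgn (f θ)` is monotone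
(increasing or decreasing). -/
def SingleCrossing {Θ : Type*} [PartialOrder Θ] (f : Θ → ℝ) : Prop :=
  Monotone (fun θ => Real.sign (f θ)) ∨ Antitone (fun θ => Real.sign (f θ))

/-- Strictly single crossing: single crossing and no two ordered zeros. -/
def StrictSingleCrossing {Θ : Type*} [PartialOrder Θ] (f : Θ → ℝ) : Prop :=
  SingleCrossing f ∧ ∀ θ' θ'' : Θ, θ' < θ'' → ¬(f θ' = 0 ∧ f θ'' = 0)

/-- A subset of a partially ordered set is an interval. -/
def IsIntervalSet {Θ : Type*} [PartialOrder Θ] (S : Set Θ) : Prop :=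
  ∀ θl θm θh : Θ, θl ∈ S → θh ∈ S → θl < θm → θm < θh → θm ∈ S

/-- Single-crossing differences. -/
def SCD {A : Type*} {Θ : Type*} [PartialOrder Θ] (u : A → Θ → ℝ) : Prop :=
  ∀ a a' : A, SingleCrossing (fun θ => u a θ - u a' θ)

/-- Strict single-crossing differences. -/
def SSCD {A : Type*} {Θ : Type*} [PartialOrder Θ] (u : A → Θ → ℝ) : Prop :=
  ∀ a a' : A, a ≠ a' → StrictSingleCrossing (fun θ => u a θ - u a' θ)

/-- The choice correspondence `C_u(S, θ)`. -/
def choiceCorr {A : Type*} {Θ : Type*} (u : A → Θ → ℝ) (S : Set A) (θ : Θ) : Set A :=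
  {a ∈ S | ∀ b ∈ S, u b θ ≤ u a θ}

/-- `f₁` ratio dominates `f₂`: conditions (RD) and (RD+). -/
def RatioDominates {Θ : Type*} [PartialOrder Θ] (f₁ f₂ : Θ → ℝ) : Prop :=
  (∀ θl θh : Θ, θl < θh → f₁ θl * f₂ θh ≤ f₁ θh * f₂ θl) ∧
  (∀ θl θm θh : Θ, θl < θm → θm < θh →
    (f₁ θl * f₂ θh = f₁ θh * f₂ θl ↔
      (f₁ θl * f₂ θm = f₁ θm * f₂ θl ∧ f₁ θm * f₂ θh = f₁ θh * f₂ θm)))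

/-- `f₁` and `f₂` are ratio ordered. -/
def RatioOrdered {Θ : Type*} [PartialOrder Θ] (f₁ f₂ : Θ → ℝ) : Prop :=
  RatioDominates f₁ f₂ ∨ RatioDominates f₂ f₁

/-- `f₁` strictly ratio dominates `f₂`. -/
def StrictRatioDominates {Θ : Type*} [PartialOrder Θ] (f₁ f₂ : Θ → ℝ) : Prop :=
  ∀ θl θh : Θ, θl < θh → f₁ θl * f₂ θh < f₁ θh * f₂ θl

/-- `f₁` and `f₂` are strictly ratio ordered. -/
def StrictRatioOrdered {Θ : Type*} [PartialOrder Θ] (f₁ f₂ : Θ → ℝ) : Prop :=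
  StrictRatioDominates f₁ f₂ ∨ StrictRatioDominates f₂ f₁

/-- The environment `(A, Θ, u)` is convex. -/
def ConvexEnv {A : Type*} {Θ : Type*} (u : A → Θ → ℝ) : Prop :=
  ∀ a a' : A, ∀ lam : ℝ, 0 < lam → lam < 1 →
    ∃ a'' : A, ∀ θ : Θ, u a'' θ = lam * u a θ + (1 - lam) * u a' θ

/-- `A` is minimal with respect to `u`: no utility-indistinguishable pair. -/
def MinimalActions {A : Type*} {Θ : Type*} (u : A → Θ → ℝ) : Prop :=
  ∀ a a' : A, a ≠ a' → ∃ θ : Θ, u a θ ≠ u a' θ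

/-- `f : Z × Θ → ℝ` is linear combinations SC-preserving. -/
def LinCombSCPreserving {Z : Type*} {Θ : Type*} [PartialOrder Θ] (f : Z → Θ → ℝ) : Prop :=
  ∀ μ : Z → ℝ, (Function.support μ).Finite →
    SingleCrossing (fun θ => ∑ᶠ z, μ z * f z θ)

/-- `f : Z × Θ → ℝ` is linear combinations SSC-preserving. -/
def LinCombSSCPreserving {Z : Type*} {Θ : Type*} [PartialOrder Θ] (f : Z → Θ → ℝ) : Prop :=
  ∀ μ : Z → ℝ, (Function.support μ).Finite →
    ((∀ θ : Θ, (∑ᶠ z, μ z * f z θ) = 0) ∨ StrictSingleCrossing (fun θ => ∑ᶠ z, μ z * f z θ))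

/-- `f : Z × Θ → ℝ` is linear combinations monotonicity-preserving. -/
def LinCombMonPreserving {Z : Type*} {Θ : Type*} [PartialOrder Θ] (f : Z → Θ → ℝ) : Prop :=
  ∀ μ : Z → ℝ, (Function.support μ).Finite →
    (Monotone (fun θ => ∑ᶠ z, μ z * f z θ) ∨ Antitone (fun θ => ∑ᶠ z, μ z * f z θ))

/-- A finite-support lottery on `X`. -/
def IsLottery {X : Type*} (P : X → ℝ) : Prop :=
  (∀ x, 0 ≤ P x) ∧ (Function.support P).Finite ∧ (∑ᶠ x, P x) = 1

/-- Single-crossing expectational differences. -/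
def SCED {X : Type*} {Θ : Type*} [PartialOrder Θ] (v : X → Θ → ℝ) : Prop :=
  ∀ P Q : X → ℝ, IsLottery P → IsLottery Q →
    SingleCrossing (fun θ => (∑ᶠ x, P x * v x θ) - ∑ᶠ x, Q x * v x θ)

open Module

section Sign

lemma realSign_le_realSign_iff {x y : ℝ} :
    Real.sign x ≤ Real.sign y ↔ SignType.sign x ≤ SignType.sign y := by
  rcases lt_trichotomy x 0 with hx | rfl | hx <;> rcases lt_trichotomy y 0 with hy | rfl | hy <;>
    simp [Real.sign_of_neg, Real.sign_of_pos, *]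

lemma singleCrossing_iff_sign {Θ : Type*} [PartialOrder Θ] {f : Θ → ℝ} :
    SingleCrossing f ↔
      Monotone (fun θ => SignType.sign (f θ)) ∨ Antitone (fun θ => SignType.sign (f θ)) := by
  simp only [SingleCrossing, Monotone, Antitone, realSign_le_realSign_iff]

lemma monotone_or_antitone_iff_forall_mem_uIcc {α β : Type*} [Preorder α] [IsDirectedOrder α]
    [IsCodirectedOrder α] [LinearOrder β] {f : α → β} :
    Monotone f ∨ Antitone f ↔ ∀ ⦃l m h⦄, l ≤ m → m ≤ h → f m ∈ Set.uIcc (f l) (f h) := by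
  refine ⟨fun hf l m h hlm hmh => ?_, fun hf => ?_⟩
  · exact Set.mem_uIcc.2 <| hf.imp (fun hf => ⟨hf hlm, hf hmh⟩) (fun hf => ⟨hf hmh, hf hlm⟩)
  by_contra! hcon
  simp only [Monotone, Antitone, not_forall, not_le] at hcon
  obtain ⟨⟨l, h, hlh, hlt⟩, l', h', hlh', hlt'⟩ := hcon
  obtain ⟨L, hL, hL'⟩ := exists_le_le l l'
  obtain ⟨H, hH, hH'⟩ := exists_ge_ge h h'
  have hHL : f H < f L := by
    have hl := Set.mem_uIcc.1 (hf hL hlh)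
    have hh := Set.mem_uIcc.1 (hf (hL.trans hlh) hH)
    grind
  have hLH : f L < f H := by
    have hl' := Set.mem_uIcc.1 (hf hL' hlh')
    have hh' := Set.mem_uIcc.1 (hf (hL'.trans hlh') hH')
    grind
  exact hLH.asymm hHL

end Sign

section ConeBetween

variable {E F : Type*} [AddCommGroup E] [Module ℝ E] [AddCommGroup F] [Module ℝ F]

/-- `y` is a nonnegative combination, with coefficients not both zero, of `x` and `z`. On the real
line this says that the sign of `y` lies between the signs of `x` and `z`. -/
def ConeBetween (x y z : E) : Prop :=
  ∃ c d : ℝ, 0 ≤ c ∧ 0 ≤ d ∧ 0 < c + d ∧ y = c • x + d • z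

namespace ConeBetween

variable {x y z : E}

lemma left (x z : E) : ConeBetween x x z :=
  ⟨1, 0, zero_le_one, le_rfl, by norm_num, by simp⟩

lemma symm (h : ConeBetween x y z) : ConeBetween z y x := by
  obtain ⟨c, d, hc, hd, hcd, rfl⟩ := h
  exact ⟨d, c, hd, hc, by rwa [add_comm], add_comm _ _⟩

lemma right (x z : E) : ConeBetween x z z :=
  (left z x).symm

lemma map (h : ConeBetween x y z) (T : E →ₗ[ℝ] F) : ConeBetween (T x) (T y) (T z) := by
  obtain ⟨c, d, hc, hd, hcd, rfl⟩ := h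
  exact ⟨c, d, hc, hd, hcd, by simp only [map_add, map_smul]⟩

lemma eq_zero_of_ends (h : ConeBetween (0 : E) y 0) : y = 0 := by
  obtain ⟨c, d, -, -, -, rfl⟩ := h
  simp only [smul_zero, add_zero]

end ConeBetween

lemma sign_mem_uIcc_iff_coneBetween {x y z : ℝ} :
    SignType.sign y ∈ Set.uIcc (SignType.sign x) (SignType.sign z) ↔ ConeBetween x y z := by
  constructor
  · wlog hxz : SignType.sign x ≤ SignType.sign z generalizing x z
    · rw [Set.uIcc_comm]
      exact fun h => (this (le_of_not_ge hxz) h).symm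
    rw [Set.uIcc_of_le hxz]
    rintro ⟨hxy, hyz⟩
    rcases lt_trichotomy y 0 with hy | rfl | hy
    · have hx : x < 0 := sign_eq_neg_one_iff.1 (SignType.le_neg_one_iff.1 (sign_neg hy ▸ hxy))
      have hyx : 0 < y / x := div_pos_of_neg_of_neg hy hx
      exact ⟨y / x, 0, hyx.le, le_rfl, by simpa using hyx, by simp [hx.ne]⟩
    · have hx : x ≤ 0 := by simpa using hxy
      have hz : 0 ≤ z := by simpa using hyz
      rcases hx.eq_or_lt with rfl | hx
      · exact .left 0 z
      · exact ⟨z, -x, hz, by linarith, by linarith, by simp only [smul_eq_mul]; ring⟩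
    · have hz : 0 < z := sign_eq_one_iff.1 (SignType.one_le_iff.1 (sign_pos hy ▸ hyz))
      have hyz : 0 < y / z := div_pos hy hz
      exact ⟨0, y / z, le_rfl, hyz.le, by simpa using hyz, by simp [hz.ne']⟩
  · rintro ⟨c, d, hc, hd, hcd, rfl⟩
    -- Normalizing the coefficients to sum to one does not change the sign.
    have hmem : (c / (c + d)) • x + (d / (c + d)) • z ∈ Set.uIcc x z := by
      rw [← segment_eq_uIcc]
      exact ⟨_, _, by positivity, by positivity, by field_simp, rfl⟩
    have hscale : c • x + d • z = (c + d) * ((c / (c + d)) • x + (d / (c + d)) • z) := by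
      simp only [smul_eq_mul]
      field_simp
    rw [hscale, sign_mul, sign_pos hcd, one_mul]
    exact SignType.sign.monotone.mapsTo_uIcc hmem

section Dual

lemma eq_smul_or_exists_apply_eq_one {𝕜 V : Type*} [Field 𝕜] [AddCommGroup V] [Module 𝕜 V]
    (φ χ : Dual 𝕜 V) : (∃ k : 𝕜, χ = k • φ) ∨ ∃ v, φ v = 0 ∧ χ v = 1 := by
  by_cases hker : LinearMap.ker φ ≤ LinearMap.ker χ
  · left
    have hmem := mem_span_of_iInf_ker_le_ker (ι := Unit) (L := fun _ => φ) (by simpa using hker)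
    rw [Set.range_const, Submodule.mem_span_singleton] at hmem
    exact hmem.imp fun _ => Eq.symm
  · obtain ⟨v, hφ, hχ⟩ := SetLike.not_le_iff_exists.1 hker
    rw [LinearMap.mem_ker] at hφ hχ
    exact .inr ⟨(χ v)⁻¹ • v, by simp [hφ], by simp [hχ]⟩

variable {φ ψ χ : Dual ℝ E}

lemma coneBetween_smul_of_forall_apply {k : ℝ}
    (h : ∀ v, ConeBetween (φ v) (ψ v) (k * φ v)) : ConeBetween φ ψ (k • φ) := by
  obtain ⟨s, rfl⟩ : ∃ s : ℝ, ψ = s • φ := by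
    refine (eq_smul_or_exists_apply_eq_one φ ψ).resolve_right ?_
    rintro ⟨v, hφ, hψ⟩
    have hv := h v
    rw [hφ, hψ, mul_zero] at hv
    exact one_ne_zero hv.eq_zero_of_ends
  rcases eq_or_ne φ 0 with rfl | hφ
  · simpa only [smul_zero] using ConeBetween.left (0 : Dual ℝ E) 0
  · obtain ⟨v, hv⟩ := LinearMap.surjective hφ 1
    simpa [hv] using (h v).map (LinearMap.toSpanSingleton ℝ (Dual ℝ E) φ)

lemma coneBetween_of_forall_apply (h : ∀ v, ConeBetween (φ v) (ψ v) (χ v)) :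
    ConeBetween φ ψ χ := by
  rcases eq_smul_or_exists_apply_eq_one φ χ with ⟨k, rfl⟩ | ⟨q, hφq, hχq⟩
  · exact coneBetween_smul_of_forall_apply h
  rcases eq_smul_or_exists_apply_eq_one χ φ with ⟨k, rfl⟩ | ⟨p, hχp, hφp⟩
  · exact (coneBetween_smul_of_forall_apply fun v => (h v).symm).symm
  -- The coefficients are read off at the pair `p, q` dual to `φ, χ`, and `p + q` shows that they do
  -- not both vanish.
  refine ⟨ψ p, ψ q, ?_, ?_, ?_, ?_⟩
  · obtain ⟨c, d, hc, -, -, hψ⟩ := h p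
    simpa [hψ, hφp, hχp] using hc
  · obtain ⟨c, d, -, hd, -, hψ⟩ := h q
    simpa [hψ, hφq, hχq] using hd
  · obtain ⟨c, d, -, -, hcd, hψ⟩ := h (p + q)
    rw [map_add] at hψ
    simpa [hψ, hφp, hχp, hφq, hχq] using hcd
  · ext v
    have hv := h (v - φ v • p - χ v • q)
    simp only [map_sub, map_smul, hφp, hχp, hφq, hχq, smul_eq_mul, mul_one, mul_zero, sub_self,
      sub_zero] at hv
    have hψ := hv.eq_zero_of_ends
    simp only [LinearMap.add_apply, LinearMap.smul_apply, smul_eq_mul]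
    linarith

end Dual

end ConeBetween

section IsConePath

variable {Θ E F : Type*} [Preorder Θ] [AddCommGroup E] [Module ℝ E] [AddCommGroup F] [Module ℝ F]
  {γ : Θ → E}

/-- Along every chain `l ≤ m ≤ h`, the vector `γ m` lies in the cone of `γ l` and `γ h`. This is
the vector-valued form of single crossing. -/
def IsConePath (γ : Θ → E) : Prop :=
  ∀ ⦃l m h⦄, l ≤ m → m ≤ h → ConeBetween (γ l) (γ m) (γ h)

lemma IsConePath.map (hγ : IsConePath γ) (T : E →ₗ[ℝ] F) : IsConePath (fun θ => T (γ θ)) :=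
  fun _ _ _ hlm hmh => (hγ hlm hmh).map T

lemma IsConePath.mem_span_pair (hγ : IsConePath γ) {l m h : Θ} (hlm : l ≤ m) (hmh : m ≤ h) :
    γ m ∈ Submodule.span ℝ {γ l, γ h} := by
  obtain ⟨c, d, -, -, -, hm⟩ := hγ hlm hmh
  exact Submodule.mem_span_pair.2 ⟨c, d, hm.symm⟩

lemma finrank_span_pair_le {𝕜 V : Type*} [DivisionRing 𝕜] [AddCommGroup V] [Module 𝕜 V]
    (x y : V) : finrank 𝕜 (Submodule.span 𝕜 {x, y}) ≤ 2 := by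
  classical
  have h := (finrank_span_finset_le_card (R := 𝕜) {x, y}).trans Finset.card_le_two
  rwa [Finset.coe_pair] at h

lemma IsConePath.exists_forall_mem_span_pair [IsDirectedOrder Θ] [IsCodirectedOrder Θ]
    [Nonempty Θ] (hγ : IsConePath γ) :
    ∃ θ₁ θ₂, ∀ θ, γ θ ∈ Submodule.span ℝ {γ θ₁, γ θ₂} := by
  let W : Θ × Θ → Submodule ℝ E := fun p => Submodule.span ℝ {γ p.1, γ p.2}
  -- A pair whose span has maximal dimension works: enclosing it together with `θ` in an interval
  -- cannot enlarge the span.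
  have hbdd : BddAbove (Set.range fun p => finrank ℝ (W p)) :=
    ⟨2, Set.forall_mem_range.2 fun p => finrank_span_pair_le _ _⟩
  obtain ⟨_, ⟨⟨θ₁, θ₂⟩, rfl⟩, hmax⟩ := hbdd.exists_isGreatest_of_nonempty (Set.range_nonempty _)
  refine ⟨θ₁, θ₂, fun θ => ?_⟩
  obtain ⟨L, hL⟩ := (Set.toFinite {θ₁, θ₂, θ}).bddBelow
  obtain ⟨H, hH⟩ := (Set.toFinite {θ₁, θ₂, θ}).bddAbove
  have hmem : ∀ θ' ∈ ({θ₁, θ₂, θ} : Set Θ), γ θ' ∈ W (L, H) :=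
    fun θ' hθ' => hγ.mem_span_pair (hL hθ') (hH hθ')
  have hle : W (θ₁, θ₂) ≤ W (L, H) :=
    Submodule.span_le.2 (Set.pair_subset (hmem θ₁ (by simp)) (hmem θ₂ (by simp)))
  have : FiniteDimensional ℝ (W (L, H)) := .span_of_finite ℝ (Set.toFinite _)
  have heq : W (θ₁, θ₂) = W (L, H) :=
    Submodule.eq_of_le_of_finrank_le hle (hmax ⟨(L, H), rfl⟩)
  change γ θ ∈ W (θ₁, θ₂)
  exact heq ▸ hmem θ (by simp)

end IsConePath

section Submodule

variable {Θ : Type*} [Preorder Θ] {V : Submodule ℝ (Θ → ℝ)}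

lemma isConePath_proj_domRestrict (hV : ∀ v ∈ V, IsConePath v) :
    IsConePath (fun θ => (LinearMap.proj θ : (Θ → ℝ) →ₗ[ℝ] ℝ).domRestrict V) :=
  fun _ _ _ hlm hmh => coneBetween_of_forall_apply fun v => hV v v.2 hlm hmh

lemma exists_eq_span_pair [IsDirectedOrder Θ] [IsCodirectedOrder Θ]
    (hV : ∀ v ∈ V, IsConePath v) :
    ∃ f₁ f₂ : Θ → ℝ, V = Submodule.span ℝ {f₁, f₂} ∧ IsConePath (fun θ => (f₁ θ, f₂ θ)) := by
  rcases isEmpty_or_nonempty Θ with hΘ | hΘ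
  · exact ⟨0, 0, Subsingleton.elim _ _, fun l => hΘ.elim l⟩
  let ev : Θ → Dual ℝ V := fun θ => (LinearMap.proj θ).domRestrict V
  have hev : IsConePath ev := isConePath_proj_domRestrict hV
  obtain ⟨θ₁, θ₂, hspan⟩ := hev.exists_forall_mem_span_pair
  have hker : LinearMap.ker ((ev θ₁).prod (ev θ₂)) = ⊥ := by
    refine LinearMap.ker_eq_bot'.2 fun v hv => Subtype.ext (funext fun θ => ?_)
    obtain ⟨h₁, h₂⟩ : ev θ₁ v = 0 ∧ ev θ₂ v = 0 := Prod.mk_eq_zero.1 hv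
    obtain ⟨a, b, hab⟩ := Submodule.mem_span_pair.1 (hspan θ)
    change ev θ v = 0
    simp only [← hab, LinearMap.add_apply, LinearMap.smul_apply, h₁, h₂, smul_zero, add_zero]
  obtain ⟨S, hS⟩ := LinearMap.exists_leftInverse_of_injective _ hker
  refine ⟨S (1, 0), S (0, 1), le_antisymm (fun v hv => ?_) ?_, ?_⟩
  · have hSv : S (v θ₁, v θ₂) = ⟨v, hv⟩ := LinearMap.congr_fun hS ⟨v, hv⟩
    have hsplit : (v θ₁, v θ₂) = v θ₁ • ((1, 0) : ℝ × ℝ) + v θ₂ • (0, 1) := by simp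
    rw [hsplit, map_add, map_smul, map_smul] at hSv
    exact Submodule.mem_span_pair.2 ⟨v θ₁, v θ₂, congrArg Subtype.val hSv⟩
  · exact Submodule.span_le.2 (Set.pair_subset (S _).2 (S _).2)
  · exact hev.map ((LinearMap.applyₗ (S (1, 0))).prod (LinearMap.applyₗ (S (0, 1))))

end Submodule

section Clockwise

/-- The determinant of `q` and `p`, nonnegative when the turn from `p` to `q` through an angle of
at most `π` is clockwise. Ratio dominance says that `θ ↦ (f₁ θ, f₂ θ)` turns clockwise. -/
def clockwiseDet (p q : ℝ × ℝ) : ℝ := q.1 * p.2 - p.1 * q.2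

variable {p q r : ℝ × ℝ}

lemma clockwiseDet_nonneg_iff : 0 ≤ clockwiseDet p q ↔ p.1 * q.2 ≤ q.1 * p.2 :=
  sub_nonneg

lemma clockwiseDet_eq_zero_iff : clockwiseDet p q = 0 ↔ p.1 * q.2 = q.1 * p.2 :=
  sub_eq_zero.trans eq_comm

lemma clockwiseDet_swap (p q : ℝ × ℝ) : clockwiseDet p.swap q.swap = -clockwiseDet p q := by
  simp only [clockwiseDet, Prod.fst_swap, Prod.snd_swap]
  ring

lemma clockwiseDet_comb_right (p r : ℝ × ℝ) (c d : ℝ) :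
    clockwiseDet p (c • p + d • r) = d * clockwiseDet p r := by
  simp only [clockwiseDet, Prod.fst_add, Prod.snd_add, Prod.smul_fst, Prod.smul_snd, smul_eq_mul]
  ring

lemma clockwiseDet_comb_left (p r : ℝ × ℝ) (c d : ℝ) :
    clockwiseDet (c • p + d • r) r = c * clockwiseDet p r := by
  simp only [clockwiseDet, Prod.fst_add, Prod.snd_add, Prod.smul_fst, Prod.smul_snd, smul_eq_mul]
  ring

lemma clockwiseDet_smul (p q r : ℝ × ℝ) :
    clockwiseDet p r • q = clockwiseDet q r • p + clockwiseDet p q • r := by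
  ext <;> simp only [clockwiseDet, Prod.fst_add, Prod.snd_add, Prod.smul_fst, Prod.smul_snd,
    smul_eq_mul] <;> ring

lemma ConeBetween.clockwiseDet_eq_zero_iff (h : ConeBetween p q r) :
    clockwiseDet p r = 0 ↔ clockwiseDet p q = 0 ∧ clockwiseDet q r = 0 := by
  obtain ⟨c, d, -, -, hcd, rfl⟩ := h
  rw [clockwiseDet_comb_right, clockwiseDet_comb_left, mul_eq_zero, mul_eq_zero]
  grind

lemma coneBetween_of_clockwiseDet_pos (hpr : 0 < clockwiseDet p r) (hpq : 0 ≤ clockwiseDet p q)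
    (hqr : 0 ≤ clockwiseDet q r) (hne : ¬(clockwiseDet p q = 0 ∧ clockwiseDet q r = 0)) :
    ConeBetween p q r := by
  refine ⟨clockwiseDet q r / clockwiseDet p r, clockwiseDet p q / clockwiseDet p r,
    by positivity, by positivity, ?_, ?_⟩
  · rw [← add_div]
    refine div_pos (lt_of_le_of_ne (by positivity) fun h => hne ?_) hpr
    exact ⟨by linarith, by linarith⟩
  · rw [div_eq_inv_mul, div_eq_inv_mul, mul_smul, mul_smul, ← smul_add, ← clockwiseDet_smul,
      inv_smul_smul₀ hpr.ne']

lemma exists_forall_eq_mul_of_mul_comm {ι 𝕜 : Type*} [Field 𝕜] {s : Set ι} {x y : ι → 𝕜}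
    (h : ∀ i ∈ s, ∀ j ∈ s, x i * y j = x j * y i) :
    (∃ k, ∀ i ∈ s, y i = k * x i) ∨ ∀ i ∈ s, x i = 0 := by
  by_cases hx : ∃ j ∈ s, x j ≠ 0
  · obtain ⟨j, hj, hxj⟩ := hx
    refine .inl ⟨y j / x j, fun i hi => ?_⟩
    have hij := h i hi j hj
    field_simp
    linear_combination -hij
  · push Not at hx
    exact .inr hx

lemma coneBetween_of_clockwiseDet_eq_zero (hpr : clockwiseDet p r = 0)
    (hpq : clockwiseDet p q = 0) (hqr : clockwiseDet q r = 0)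
    (h₁ : ConeBetween p.1 q.1 r.1) (h₂ : ConeBetween p.2 q.2 r.2) : ConeBetween p q r := by
  have hcomm : ∀ v ∈ ({p, q, r} : Set (ℝ × ℝ)), ∀ w ∈ ({p, q, r} : Set (ℝ × ℝ)),
      v.1 * w.2 = w.1 * v.2 := by
    rw [clockwiseDet_eq_zero_iff] at hpr hpq hqr
    simp [hpr, hpq, hqr]
  rcases exists_forall_eq_mul_of_mul_comm hcomm with ⟨k, hk⟩ | h0
  · simp only [Set.forall_mem_insert, Set.mem_singleton_iff, forall_eq] at hk
    have h := h₁.map ((LinearMap.id : ℝ →ₗ[ℝ] ℝ).prod (k • LinearMap.id))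
    simpa [← hk.1, ← hk.2.1, ← hk.2.2] using h
  · simp only [Set.forall_mem_insert, Set.mem_singleton_iff, forall_eq] at h0
    obtain ⟨hp, hq, hr⟩ := h0
    convert h₂.map (LinearMap.inr ℝ ℝ ℝ) using 1 <;> ext <;> simp [hp, hq, hr]

end Clockwise

section RatioOrdered

lemma IsConePath.exists_clockwiseDet_eq_mul {Θ : Type*} [Preorder Θ] {γ : Θ → ℝ × ℝ}
    (hγ : IsConePath γ) {L l h H : Θ} (hL : L ≤ l) (hlh : l ≤ h) (hH : h ≤ H) :
    ∃ k, 0 ≤ k ∧ clockwiseDet (γ l) (γ h) = k * clockwiseDet (γ L) (γ H) := by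
  obtain ⟨_, d, -, hd, -, hh⟩ := hγ (hL.trans hlh) hH
  obtain ⟨c, _, hc, -, -, hl⟩ := hγ hL hlh
  refine ⟨c * d, mul_nonneg hc hd, ?_⟩
  rw [hl, clockwiseDet_comb_left, hh, clockwiseDet_comb_right, mul_assoc]

lemma IsConePath.clockwiseDet_nonneg_or_nonpos {Θ : Type*} [Preorder Θ] [IsDirectedOrder Θ]
    [IsCodirectedOrder Θ] {γ : Θ → ℝ × ℝ} (hγ : IsConePath γ) :
    (∀ l h, l ≤ h → 0 ≤ clockwiseDet (γ l) (γ h)) ∨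
      ∀ l h, l ≤ h → clockwiseDet (γ l) (γ h) ≤ 0 := by
  by_contra! ⟨⟨l, h, hlh, hneg⟩, l', h', hlh', hpos⟩
  obtain ⟨L, hL, hL'⟩ := exists_le_le l l'
  obtain ⟨H, hH, hH'⟩ := exists_ge_ge h h'
  obtain ⟨k, hk, hdet⟩ := hγ.exists_clockwiseDet_eq_mul hL hlh hH
  obtain ⟨k', hk', hdet'⟩ := hγ.exists_clockwiseDet_eq_mul hL' hlh' hH'
  rw [hdet] at hneg
  rw [hdet'] at hpos
  exact (neg_of_mul_neg_right hneg hk).not_gt (pos_of_mul_pos_right hpos hk')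

variable {Θ : Type*} [PartialOrder Θ] {f₁ f₂ : Θ → ℝ}

lemma ratioDominates_iff_clockwiseDet :
    RatioDominates f₁ f₂ ↔
      (∀ l h, l < h → 0 ≤ clockwiseDet (f₁ l, f₂ l) (f₁ h, f₂ h)) ∧
      ∀ l m h, l < m → m < h → (clockwiseDet (f₁ l, f₂ l) (f₁ h, f₂ h) = 0 ↔
        clockwiseDet (f₁ l, f₂ l) (f₁ m, f₂ m) = 0 ∧
          clockwiseDet (f₁ m, f₂ m) (f₁ h, f₂ h) = 0) := by
  simp only [RatioDominates, clockwiseDet_nonneg_iff, clockwiseDet_eq_zero_iff]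

lemma RatioDominates.isConePath (hr : RatioDominates f₁ f₂) (h₁ : IsConePath f₁)
    (h₂ : IsConePath f₂) : IsConePath (fun θ => (f₁ θ, f₂ θ)) := by
  obtain ⟨hRD, hRDplus⟩ := ratioDominates_iff_clockwiseDet.1 hr
  intro l m h hlm hmh
  rcases hlm.eq_or_lt with rfl | hlm'
  · exact .left _ _
  rcases hmh.eq_or_lt with rfl | hmh'
  · exact .right _ _
  have hiff := hRDplus l m h hlm' hmh'
  rcases (hRD l h (hlm'.trans hmh')).eq_or_lt with hdet | hdet
  · obtain ⟨hdet₁, hdet₂⟩ := hiff.1 hdet.symm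
    exact coneBetween_of_clockwiseDet_eq_zero hdet.symm hdet₁ hdet₂ (h₁ hlm hmh) (h₂ hlm hmh)
  · exact coneBetween_of_clockwiseDet_pos hdet (hRD l m hlm') (hRD m h hmh')
      (mt hiff.2 hdet.ne')

lemma IsConePath.swap {γ : Θ → ℝ × ℝ} (hγ : IsConePath γ) :
    IsConePath (fun θ => (γ θ).swap) :=
  hγ.map (LinearEquiv.prodComm ℝ ℝ ℝ).toLinearMap

lemma IsConePath.ratioDominates (hf : IsConePath (fun θ => (f₁ θ, f₂ θ)))
    (hdet : ∀ l h, l ≤ h → 0 ≤ clockwiseDet (f₁ l, f₂ l) (f₁ h, f₂ h)) :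
    RatioDominates f₁ f₂ :=
  ratioDominates_iff_clockwiseDet.2 ⟨fun l h hlh => hdet l h hlh.le,
    fun _ _ _ hlm hmh => (hf hlm.le hmh.le).clockwiseDet_eq_zero_iff⟩

variable [IsDirectedOrder Θ] [IsCodirectedOrder Θ]

lemma IsConePath.ratioOrdered (hf : IsConePath (fun θ => (f₁ θ, f₂ θ))) : RatioOrdered f₁ f₂ := by
  refine hf.clockwiseDet_nonneg_or_nonpos.imp hf.ratioDominates fun hdet => ?_
  refine hf.swap.ratioDominates fun l h hlh => ?_
  have hswap := clockwiseDet_swap (f₁ l, f₂ l) (f₁ h, f₂ h)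
  exact hswap ▸ neg_nonneg.2 (hdet l h hlh)

lemma singleCrossing_iff_isConePath {f : Θ → ℝ} : SingleCrossing f ↔ IsConePath f := by
  rw [singleCrossing_iff_sign, monotone_or_antitone_iff_forall_mem_uIcc]
  simp only [sign_mem_uIcc_iff_coneBetween, IsConePath]

theorem isConePath_prodMk_iff :
    IsConePath (fun θ => (f₁ θ, f₂ θ)) ↔
      SingleCrossing f₁ ∧ SingleCrossing f₂ ∧ RatioOrdered f₁ f₂ := by
  simp only [singleCrossing_iff_isConePath]
  refine ⟨fun hf => ⟨hf.map (LinearMap.fst ℝ ℝ ℝ), hf.map (LinearMap.snd ℝ ℝ ℝ),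
    hf.ratioOrdered⟩, ?_⟩
  rintro ⟨h₁, h₂, hr | hr⟩
  · exact hr.isConePath h₁ h₂
  · exact (hr.isConePath h₂ h₁).swap

end RatioOrdered

section ConvexEnv

open scoped Pointwise

lemma exists_eq_smul_sub_of_mem_vectorSpan {𝕜 E : Type*} [Field 𝕜] [LinearOrder 𝕜]
    [IsStrictOrderedRing 𝕜] [AddCommGroup E] [Module 𝕜 E] {s : Set E} (hs : Convex 𝕜 s)
    (hne : s.Nonempty) {v : E} (hv : v ∈ vectorSpan 𝕜 s) :
    ∃ c : 𝕜, ∃ x ∈ s, ∃ y ∈ s, v = c • (x - y) := by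
  let K := ConvexCone.hull 𝕜 (s - s)
  have hK : ∀ {w}, w ∈ K ↔ ∃ c : 𝕜, 0 < c ∧ w ∈ c • (s - s) :=
    ConvexCone.mem_hull_of_convex (hs.sub hs)
  have hzero : (0 : E) ∈ K := ConvexCone.subset_hull hne.zero_mem_sub
  have hneg : ∀ w ∈ K, -w ∈ K := by
    intro w hw
    obtain ⟨c, hc, hw⟩ := hK.1 hw
    exact hK.2 ⟨c, hc, by rwa [← Set.neg_mem_neg, neg_neg, ← Set.smul_set_neg, neg_sub]⟩
  have hsmul : ∀ (k : 𝕜), ∀ w ∈ K, k • w ∈ K := by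
    intro k w hw
    rcases lt_trichotomy k 0 with hk | rfl | hk
    · simpa only [neg_smul, neg_neg] using hneg _ (K.smul_mem (neg_pos.2 hk) hw)
    · simpa only [zero_smul] using hzero
    · exact K.smul_mem hk hw
  have hvK : v ∈ K := by
    rw [vectorSpan_def] at hv
    induction hv using Submodule.span_induction with
    | mem w hw => exact ConvexCone.subset_hull hw
    | zero => exact hzero
    | add _ _ _ _ hx hy => exact K.add_mem hx hy
    | smul k w _ hw => exact hsmul k w hw
  obtain ⟨c, -, _, ⟨x, hx, y, hy, rfl⟩, rfl⟩ := hK.1 hvK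
  exact ⟨c, x, hx, y, hy, rfl⟩

lemma ConvexEnv.convex_range {Θ A : Type*} {u : A → Θ → ℝ} (hu : ConvexEnv u) :
    Convex ℝ (Set.range u) := by
  refine convex_iff_forall_pos.2 ?_
  rintro _ ⟨a, rfl⟩ _ ⟨a', rfl⟩ s t hs ht hst
  obtain ⟨a'', ha''⟩ := hu a a' s hs (by linarith)
  refine ⟨a'', funext fun θ => ?_⟩
  simp only [ha'', ← eq_sub_of_add_eq' hst, Pi.add_apply, Pi.smul_apply, smul_eq_mul]

lemma SCD.isConePath_of_mem_vectorSpan {Θ A : Type*} [PartialOrder Θ] [IsDirectedOrder Θ]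
    [IsCodirectedOrder Θ] [Nonempty A] {u : A → Θ → ℝ} (hu : SCD u) (hconv : ConvexEnv u)
    {v : Θ → ℝ} (hv : v ∈ vectorSpan ℝ (Set.range u)) : IsConePath v := by
  obtain ⟨c, _, ⟨a, rfl⟩, _, ⟨a', rfl⟩, rfl⟩ :=
    exists_eq_smul_sub_of_mem_vectorSpan hconv.convex_range (Set.range_nonempty u) hv
  exact (singleCrossing_iff_isConePath.1 (hu a a')).map (c • LinearMap.id)

end ConvexEnv

/-- In a convex environment, `u` has SCD iff it has the
two-statistic form with single-crossing, ratio-ordered coefficient functions. -/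
theorem scd_in_convex_env_iff {Θ A : Type*} [PartialOrder Θ]
    (hub : ∀ θ₁ θ₂ : Θ, ∃ θ : Θ, θ₁ ≤ θ ∧ θ₂ ≤ θ)
    (hlb : ∀ θ₁ θ₂ : Θ, ∃ θ : Θ, θ ≤ θ₁ ∧ θ ≤ θ₂)
    (u : A → Θ → ℝ) (hconv : ConvexEnv u) :
    SCD u ↔
      ∃ (g₁ g₂ : A → ℝ) (f₁ f₂ h : Θ → ℝ),
        SingleCrossing f₁ ∧ SingleCrossing f₂ ∧ RatioOrdered f₁ f₂ ∧
        (∀ (a : A) (θ : Θ), u a θ = g₁ a * f₁ θ + g₂ a * f₂ θ + h θ) := by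
  have : IsDirectedOrder Θ := ⟨hub⟩
  have : IsCodirectedOrder Θ := ⟨hlb⟩
  constructor
  · intro hu
    rcases isEmpty_or_nonempty A with hA | hA
    · have hzero : IsConePath (fun _ : Θ => ((0 : ℝ), (0 : ℝ))) := fun _ _ _ _ _ => .left _ _
      obtain ⟨h₁, h₂, hr⟩ := isConePath_prodMk_iff.1 hzero
      exact ⟨0, 0, _, _, 0, h₁, h₂, hr, hA.elim⟩
    have a₀ : A := Classical.arbitrary A
    obtain ⟨f₁, f₂, hspan, hf⟩ :=
      exists_eq_span_pair fun _ hv => hu.isConePath_of_mem_vectorSpan hconv hv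
    have hmem : ∀ a, u a - u a₀ ∈ Submodule.span ℝ {f₁, f₂} := fun a =>
      hspan ▸ vsub_mem_vectorSpan ℝ (Set.mem_range_self a) (Set.mem_range_self a₀)
    choose g₁ g₂ hg using fun a => Submodule.mem_span_pair.1 (hmem a)
    obtain ⟨h₁, h₂, hr⟩ := isConePath_prodMk_iff.1 hf
    exact ⟨g₁, g₂, f₁, f₂, u a₀, h₁, h₂, hr, fun a θ => eq_add_of_sub_eq (congrFun (hg a) θ).symm⟩
  · rintro ⟨g₁, g₂, f₁, f₂, h, h₁, h₂, hr, hu⟩ a a'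
    have hdiff := (isConePath_prodMk_iff.2 ⟨h₁, h₂, hr⟩).map
      ((g₁ a - g₁ a') • LinearMap.fst ℝ ℝ ℝ + (g₂ a - g₂ a') • LinearMap.snd ℝ ℝ ℝ)
    refine singleCrossing_iff_isConePath.2 ?_
    convert hdiff using 2 with θ
    simp only [hu, LinearMap.add_apply, LinearMap.smul_apply, LinearMap.fst_apply,
      LinearMap.snd_apply, smul_eq_mul]
    ring
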